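/- arXiv:0707.3598 — 2 statements merged into one kernel-verified Lean document; each statement's English description precedes it below -/
import Mathlib

section
/- There exists a unique φ̂ ∈ (0, π/2) such that f_{π/(2l)}(φ̂) = 0, where f_{π/(2l)}(φ) = Σ_{j=1}^{l-1} (sin(jπ/l))^{-α} − Σ_{j=1}^{l} cos²((2j−1)π/(2l)) / (sin²((2j−1)π/(2l)) + tan²φ)^{β+1}. Moreover the point (θ, φ) = (π/(2l), φ̂) is a critical point of U, i.e. ∂U/∂θ(π/(2l), φ̂) = 0 and ∂U/∂φ(π/(2l), φ̂) = 0; this is the antiprism central configuration. -/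
open Real Finset

/-- The reduced dihedral potential on the shape sphere. -/
noncomputable def dihedralU (l : ℕ) (α : ℝ) (θ φ : ℝ) : ℝ :=
  (2 * Real.cos φ) ^ (-α) *
    ((∑ j ∈ Finset.Icc 1 (l - 1), Real.sin ((j : ℝ) * Real.pi / l) ^ (-α)) +
      ∑ j ∈ Finset.Icc 1 l,
        (Real.sin ((j : ℝ) * Real.pi / l - θ) ^ 2 + Real.tan φ ^ 2) ^ (-α / 2))

/-!
In the variable `T = tan² φ` the equation `f_θ(φ) = 0` reads `A = ∑ cos² xⱼ / (sin² xⱼ + T)^(α/2+1)`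
with `xⱼ = (2j - 1)π / (2l)` and `A = ∑ sin(jπ/l)^(-α) > 0`. The right-hand side decreases strictly
to `0`, so there is exactly one root once it exceeds `A` at `T = 0`. Two inequalities give this.
Each `jπ/l` is the midpoint of `xⱼ` and `xⱼ₊₁`, so `sin²((x + y)/2) ≥ sin x sin y` and AM-GM bound
`A` by `∑ sin(xⱼ)^(-α)`, strictly because the two end terms are only half used. And with
`t = sin² xⱼ` and `p = α/2 + 1`, the difference `(1 - 2t) / t^p` of the terms at `T = 0` is at least
`2^p (1 - 2t) = 2^p cos(2xⱼ)`, because `1 - 2t` and `t^(-p) - 2^p` change sign together at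
`t = 1/2`; the cosines sum to zero.

The `φ`-derivative of `U` is a multiple of `f_θ`, and the `θ`-derivative vanishes because `U` is
invariant under the reflection `θ ↦ π/l - θ`, which fixes `π/(2l)`.
-/

section WeightedPowerSum

open Filter Topology

variable {ι : Type*} {s : Finset ι} {w a : ι → ℝ} {p : ℝ}

lemma continuousOn_sum_div_add_rpow (ha : ∀ i ∈ s, 0 < a i) :
    ContinuousOn (fun T => ∑ i ∈ s, w i / (a i + T) ^ p) (Set.Ici 0) := by
  refine continuousOn_finsetSum s fun i hi T hT => ContinuousAt.continuousWithinAt ?_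
  have hpos : 0 < a i + T := add_pos_of_pos_of_nonneg (ha i hi) hT
  exact continuousAt_const.div
    ((continuousAt_const.add continuousAt_id).rpow_const (Or.inl hpos.ne'))
    (rpow_pos_of_pos hpos p).ne'

lemma strictAntiOn_sum_div_add_rpow (hp : 0 < p) (ha : ∀ i ∈ s, 0 < a i)
    (hw : ∀ i ∈ s, 0 ≤ w i) (hw' : ∃ i ∈ s, 0 < w i) :
    StrictAntiOn (fun T => ∑ i ∈ s, w i / (a i + T) ^ p) (Set.Ici 0) := by
  intro S hS T _ hST
  have hpos : ∀ i ∈ s, 0 < a i + S := fun i hi => add_pos_of_pos_of_nonneg (ha i hi) hS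
  have hlt : ∀ i ∈ s, (a i + S) ^ p < (a i + T) ^ p := fun i hi =>
    rpow_lt_rpow (hpos i hi).le (by gcongr) hp
  obtain ⟨i, hi, hwi⟩ := hw'
  exact sum_lt_sum
    (fun j hj => div_le_div_of_nonneg_left (hw j hj) (rpow_pos_of_pos (hpos j hj) p) (hlt j hj).le)
    ⟨i, hi, div_lt_div_of_pos_left hwi (rpow_pos_of_pos (hpos i hi) p) (hlt i hi)⟩

lemma tendsto_sum_div_add_rpow_atTop (hp : 0 < p) :
    Tendsto (fun T => ∑ i ∈ s, w i / (a i + T) ^ p) atTop (𝓝 0) := by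
  rw [← sum_const_zero (s := s) (M := ℝ)]
  exact tendsto_finsetSum s fun i _ => tendsto_const_nhds.div_atTop <|
    (tendsto_rpow_atTop hp).comp (tendsto_atTop_add_const_left _ (a i) tendsto_id)

lemma existsUnique_pos_sum_div_add_rpow_eq (hp : 0 < p) (ha : ∀ i ∈ s, 0 < a i)
    (hw : ∀ i ∈ s, 0 ≤ w i) {A : ℝ} (hA : 0 < A) (hA' : A < ∑ i ∈ s, w i / a i ^ p) :
    ∃! T, 0 < T ∧ A = ∑ i ∈ s, w i / (a i + T) ^ p := by
  set F : ℝ → ℝ := fun T => ∑ i ∈ s, w i / (a i + T) ^ p with hF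
  have hF_zero : A < F 0 := by simpa only [hF, add_zero] using hA'
  have hw' : ∃ i ∈ s, 0 < w i := by
    by_contra! hw'
    refine (hA.trans hA').not_ge (sum_nonpos fun i hi => ?_)
    exact div_nonpos_of_nonpos_of_nonneg (hw' i hi) (rpow_nonneg (ha i hi).le p)
  have hF_inj : Set.InjOn F (Set.Ici 0) := (strictAntiOn_sum_div_add_rpow hp ha hw hw').injOn
  have hF_lim : Tendsto F atTop (𝓝 0) := tendsto_sum_div_add_rpow_atTop hp
  obtain ⟨B, hFB, hB⟩ : ∃ B, F B < A ∧ 0 ≤ B :=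
    ((hF_lim.eventually_lt_const hA).and (eventually_ge_atTop 0)).exists
  obtain ⟨T, hT, hFT⟩ : A ∈ F '' Set.Ioo 0 B :=
    intermediate_value_Ioo' hB
      ((continuousOn_sum_div_add_rpow ha).mono Set.Icc_subset_Ici_self) ⟨hFB, hF_zero⟩
  exact ⟨T, ⟨hT.1, hFT.symm⟩, fun S hS => hF_inj hS.1.le hT.1.le (hS.2.symm.trans hFT.symm)⟩

end WeightedPowerSum

section Trigonometry

lemma existsUnique_tan_sq {P : ℝ → Prop} (h : ∃! T, 0 < T ∧ P T) :
    ∃! φ, φ ∈ Set.Ioo 0 (π / 2) ∧ P (tan φ ^ 2) := by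
  obtain ⟨T, ⟨hT, hPT⟩, hT_unique⟩ := h
  refine ⟨arctan √T, ⟨⟨arctan_pos.2 (sqrt_pos.2 hT), arctan_lt_pi_div_two _⟩, ?_⟩, ?_⟩
  · rwa [tan_arctan, sq_sqrt hT.le]
  · rintro φ ⟨hφ, hPφ⟩
    have htan : 0 < tan φ := tan_pos_of_pos_of_lt_pi_div_two hφ.1 hφ.2
    rw [← hT_unique (tan φ ^ 2) ⟨pow_pos htan 2, hPφ⟩, sqrt_sq htan.le,
      arctan_tan (by linarith [hφ.1, pi_pos]) hφ.2]

lemma sum_cos_two_mul_pi_div_sub {l : ℕ} (hl : 2 ≤ l) (θ : ℝ) :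
    ∑ j ∈ Icc 1 l, cos (2 * (j * π / l - θ)) = 0 := by
  have hl' : (2 : ℝ) ≤ l := by exact_mod_cast hl
  have hsin : 0 < sin (π / l) :=
    sin_pos_of_pos_of_lt_pi (by positivity) (div_lt_self pi_pos (by linarith))
  have hsum := sin_mul_sum_cos l (2 * π / l) (2 * π / l - 2 * θ)
  rw [show l * (2 * π / l) / 2 = π by field_simp, show 2 * π / l / 2 = π / l by ring, sin_pi,
    zero_mul, mul_eq_zero_iff_left hsin.ne'] at hsum
  rw [← Ico_add_one_right_eq_Icc, sum_Ico_eq_sum_range, Nat.add_sub_cancel, ← hsum]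
  refine sum_congr rfl fun i _ => ?_
  congr 1
  push_cast
  ring

lemma two_mul_sin_rpow_neg_le {y d α : ℝ} (hα : 0 ≤ α) (hl : 0 < sin (y - d)) (hm : 0 < sin y)
    (hr : 0 < sin (y + d)) :
    2 * sin y ^ (-α) ≤ sin (y - d) ^ (-α) + sin (y + d) ^ (-α) := by
  have hprod : sin (y - d) * sin (y + d) ≤ sin y ^ 2 := by
    rw [sin_sub, sin_add]
    nlinarith [sin_sq_add_cos_sq y, sin_sq_add_cos_sq d, sq_nonneg (sin d)]
  have hhalf : ∀ {x : ℝ}, 0 < x → x ^ (-α) = (x ^ (-α / 2)) ^ 2 := fun hx => by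
    rw [← rpow_mul_natCast hx.le]; congr 1; push_cast; ring
  calc 2 * sin y ^ (-α) = 2 * (sin y ^ 2) ^ (-α / 2) := by
        rw [hhalf hm, rpow_pow_comm hm.le]
    _ ≤ 2 * (sin (y - d) * sin (y + d)) ^ (-α / 2) := by
        gcongr 2 * ?_
        exact rpow_le_rpow_of_nonpos (mul_pos hl hr) hprod (by linarith)
    _ = 2 * sin (y - d) ^ (-α / 2) * sin (y + d) ^ (-α / 2) := by
        rw [mul_rpow hl.le hr.le, mul_assoc]
    _ ≤ sin (y - d) ^ (-α) + sin (y + d) ^ (-α) := by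
        rw [hhalf hl, hhalf hr]
        exact two_mul_le_add_sq _ _

lemma one_sub_two_mul_mul_two_rpow_le {t p : ℝ} (ht : 0 < t) (hp : 0 ≤ p) :
    (1 - 2 * t) * 2 ^ p ≤ (1 - 2 * t) / t ^ p := by
  rw [div_eq_mul_inv, ← inv_rpow ht.le]
  rcases le_total (2 * t) 1 with h | h
  · have : 2 ≤ t⁻¹ := by rwa [le_inv_comm₀ two_pos ht, ← one_div, le_div_iff₀' two_pos]
    exact mul_le_mul_of_nonneg_left (rpow_le_rpow two_pos.le this hp) (by linarith)
  · have : t⁻¹ ≤ 2 := by rwa [inv_le_comm₀ ht two_pos, ← one_div, div_le_iff₀' two_pos]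
    exact mul_le_mul_of_nonpos_left (rpow_le_rpow (by positivity) this hp) (by linarith)

lemma sin_rpow_neg_add_le {x α : ℝ} (hα : -2 ≤ α) (hx : 0 < sin x) :
    sin x ^ (-α) + cos (2 * x) * 2 ^ (α / 2 + 1) ≤ cos x ^ 2 / (sin x ^ 2) ^ (α / 2 + 1) := by
  have hs : 0 < sin x ^ 2 := by positivity
  have hpow : sin x ^ (-α) = sin x ^ 2 / (sin x ^ 2) ^ (α / 2 + 1) := by
    rw [rpow_add_one hs.ne', div_mul_cancel_right₀ hs.ne', ← rpow_neg hs.le,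
      ← rpow_natCast_mul hx.le]
    congr 1; push_cast; ring
  have hcos : cos (2 * x) = 1 - 2 * sin x ^ 2 := by rw [cos_two_mul, cos_sq']; ring
  calc sin x ^ (-α) + cos (2 * x) * 2 ^ (α / 2 + 1)
      ≤ sin x ^ 2 / (sin x ^ 2) ^ (α / 2 + 1) +
          (1 - 2 * sin x ^ 2) / (sin x ^ 2) ^ (α / 2 + 1) := by
        rw [hpow, hcos]
        gcongr
        exact one_sub_two_mul_mul_two_rpow_le hs (by linarith)
    _ = cos x ^ 2 / (sin x ^ 2) ^ (α / 2 + 1) := by rw [← add_div, cos_sq']; ring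

lemma sum_sin_rpow_neg_le {ι : Type*} {s : Finset ι} {x : ι → ℝ} {α : ℝ} (hα : -2 ≤ α)
    (hx : ∀ i ∈ s, 0 < sin (x i)) (hsum : ∑ i ∈ s, cos (2 * x i) = 0) :
    ∑ i ∈ s, sin (x i) ^ (-α) ≤ ∑ i ∈ s, cos (x i) ^ 2 / (sin (x i) ^ 2) ^ (α / 2 + 1) := by
  simpa only [sum_add_distrib, ← sum_mul, hsum, zero_mul, add_zero] using
    sum_le_sum fun i hi => sin_rpow_neg_add_le hα (hx i hi)

end Trigonometry

lemma sin_mul_pi_div_pos {l j : ℕ} (hj : j ∈ Icc 1 (l - 1)) : 0 < sin (j * π / l) := by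
  rw [mem_Icc] at hj
  have hj0 : (0 : ℝ) < j := by exact_mod_cast hj.1
  have hjl : (j : ℝ) < l := by exact_mod_cast (by lia : j < l)
  have hl : (0 : ℝ) < l := hj0.trans hjl
  refine sin_pos_of_pos_of_lt_pi (by positivity) ?_
  rw [div_lt_iff₀ hl, mul_comm π]
  gcongr

/-- Half the difference in azimuth between a vertex of one `l`-gon of the antiprism and the `j`-th
vertex of the other. It is written as `jπ / l - θ` with `θ = π / (2l)`, the form in which it occurs
in `dihedralU`, rather than as `(2j - 1)π / (2l)`. -/
noncomputable def antiprismAngle (l j : ℕ) : ℝ := j * π / l - π / (2 * l)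

lemma antiprismAngle_eq (l j : ℕ) : antiprismAngle l j = (2 * j - 1) * π / (2 * l) := by
  rw [antiprismAngle, mul_comm 2 (l : ℝ), ← div_div π, ← div_div _ (l : ℝ)]
  ring

lemma antiprismAngle_succ (l j : ℕ) : antiprismAngle l (j + 1) = j * π / l + π / (2 * l) := by
  rw [antiprismAngle_eq]
  rcases eq_or_ne l 0 with rfl | hl
  · simp
  · push_cast; field_simp; ring

lemma sin_antiprismAngle_pos {l j : ℕ} (hj : j ∈ Icc 1 l) : 0 < sin (antiprismAngle l j) := by
  rw [mem_Icc] at hj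
  have hj1 : (1 : ℝ) ≤ j := by exact_mod_cast hj.1
  have hjl : (j : ℝ) ≤ l := by exact_mod_cast hj.2
  rw [antiprismAngle_eq]
  have : (0 : ℝ) < 2 * j - 1 := by linarith
  have hl : (0 : ℝ) < 2 * l := by linarith
  refine sin_pos_of_pos_of_lt_pi (by positivity) ?_
  rw [div_lt_iff₀ hl, mul_comm π]
  gcongr
  linarith

lemma sum_Icc_add_succ {M : Type*} [AddCommMonoid M] (h : ℕ → M) (n : ℕ) :
    ∑ j ∈ Icc 1 n, (h j + h (j + 1)) + (h 1 + h (n + 1)) = 2 • ∑ j ∈ Icc 1 (n + 1), h j := by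
  induction n with
  | zero => simp [two_nsmul]
  | succ n ih =>
    rw [sum_Icc_succ_top (by lia), sum_Icc_succ_top (by lia : 1 ≤ n + 1 + 1), nsmul_add, ← ih,
      two_nsmul]
    abel

lemma sum_sin_rpow_neg_lt_sum_sin_antiprismAngle {l : ℕ} (hl : l ≠ 0) {α : ℝ} (hα : 0 ≤ α) :
    ∑ j ∈ Icc 1 (l - 1), sin (j * π / l) ^ (-α) <
      ∑ j ∈ Icc 1 l, sin (antiprismAngle l j) ^ (-α) := by
  set h : ℕ → ℝ := fun j => sin (antiprismAngle l j) ^ (-α)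
  have hpos : ∀ j ∈ Icc 1 l, 0 < h j := fun j hj => rpow_pos_of_pos (sin_antiprismAngle_pos hj) _
  have hmid : ∀ j ∈ Icc 1 (l - 1), 2 * sin (j * π / l) ^ (-α) ≤ h j + h (j + 1) := by
    intro j hj
    have hleft : 0 < sin (antiprismAngle l j) := sin_antiprismAngle_pos (by grind)
    have hright : 0 < sin (antiprismAngle l (j + 1)) := sin_antiprismAngle_pos (by grind)
    simp only [h, antiprismAngle_succ] at hright ⊢
    exact two_mul_sin_rpow_neg_le hα hleft (sin_mul_pi_div_pos hj) hright
  have hsum := sum_le_sum hmid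
  have htelescope := sum_Icc_add_succ h (l - 1)
  rw [Nat.sub_one_add_one hl, two_nsmul] at htelescope
  rw [← mul_sum] at hsum
  linarith [hpos 1 (by grind), hpos l (by grind)]

lemma sum_sin_rpow_neg_lt_sum_cos_sq_div {l : ℕ} (hl : 2 ≤ l) {α : ℝ} (hα : 0 ≤ α) :
    ∑ j ∈ Icc 1 (l - 1), sin (j * π / l) ^ (-α) <
      ∑ j ∈ Icc 1 l, cos (antiprismAngle l j) ^ 2 /
        (sin (antiprismAngle l j) ^ 2) ^ (α / 2 + 1) :=
  (sum_sin_rpow_neg_lt_sum_sin_antiprismAngle (by lia) hα).trans_le <|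
    sum_sin_rpow_neg_le (by linarith) (fun _ => sin_antiprismAngle_pos)
      (sum_cos_two_mul_pi_div_sub hl _)

lemma sum_sin_mul_pi_div_rpow_neg_pos {l : ℕ} (hl : 2 ≤ l) (α : ℝ) :
    0 < ∑ j ∈ Icc 1 (l - 1), sin (j * π / l) ^ (-α) :=
  sum_pos (fun _ hj => rpow_pos_of_pos (sin_mul_pi_div_pos hj) _) ⟨1, by grind⟩

/-- The function `f_θ(φ)` of the paper. Away from `φ = 0` its zeros are those of `∂U/∂φ`, by
`hasDerivAt_dihedralU_phi`. -/
noncomputable def dihedralBalance (l : ℕ) (α θ φ : ℝ) : ℝ :=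
  ∑ j ∈ Icc 1 (l - 1), sin (j * π / l) ^ (-α) -
    ∑ j ∈ Icc 1 l, cos (j * π / l - θ) ^ 2 /
      (sin (j * π / l - θ) ^ 2 + tan φ ^ 2) ^ (α / 2 + 1)

theorem existsUnique_dihedralBalance_eq_zero {l : ℕ} (hl : 2 ≤ l) {α : ℝ} (hα : 0 ≤ α) :
    ∃! φ, φ ∈ Set.Ioo 0 (π / 2) ∧ dihedralBalance l α (π / (2 * l)) φ = 0 := by
  have hT := existsUnique_pos_sum_div_add_rpow_eq (by linarith)
    (fun j hj => pow_pos (sin_antiprismAngle_pos hj) 2) (fun _ _ => sq_nonneg _)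
    (sum_sin_mul_pi_div_rpow_neg_pos hl α) (sum_sin_rpow_neg_lt_sum_cos_sq_div hl hα)
  simp only [dihedralBalance, sub_eq_zero]
  exact existsUnique_tan_sq hT

lemma dihedralU_pi_div_sub (l : ℕ) (α θ φ : ℝ) :
    dihedralU l α (π / l - θ) φ = dihedralU l α θ φ := by
  have hangle : ∀ j ∈ Icc 1 l, sin (j * π / l - (π / l - θ)) =
      sin ((l + 1 - j : ℕ) * π / l - θ) := by
    intro j hj
    rw [mem_Icc] at hj
    have hl : (l : ℝ) ≠ 0 := by norm_cast; lia
    rw [← sin_pi_sub, Nat.cast_sub (by lia)]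
    congr 1
    push_cast
    field_simp
    ring
  unfold dihedralU
  congr 2
  refine sum_nbij' (l + 1 - ·) (l + 1 - ·) ?_ ?_ ?_ ?_ fun j hj => by rw [hangle j hj]
  all_goals grind

lemma deriv_eq_zero_of_reflection {𝕜 F : Type*} [NontriviallyNormedField 𝕜] [CharZero 𝕜]
    [NormedAddCommGroup F] [NormedSpace 𝕜 F] {f : 𝕜 → F} {c : 𝕜} (hf : ∀ x, f (2 * c - x) = f x) :
    deriv f c = 0 := by
  have : IsAddTorsionFree F := .of_isTorsionFree 𝕜 F
  have h := deriv_comp_const_sub f (2 * c) c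
  rw [funext hf, two_mul, add_sub_cancel_right] at h
  exact self_eq_neg.1 h

theorem deriv_dihedralU_theta_eq_zero (l : ℕ) (α φ : ℝ) :
    deriv (fun θ => dihedralU l α θ φ) (π / (2 * l)) = 0 := by
  refine deriv_eq_zero_of_reflection fun θ => ?_
  rw [← mul_div_assoc, mul_div_mul_left _ _ two_ne_zero]
  exact dihedralU_pi_div_sub l α θ φ

lemma hasDerivAt_two_mul_cos_rpow_neg (α : ℝ) {φ : ℝ} (hφ : cos φ ≠ 0) :
    HasDerivAt (fun p => (2 * cos p) ^ (-α)) (α * tan φ * (2 * cos φ) ^ (-α)) φ := by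
  have h2 : 2 * cos φ ≠ 0 := mul_ne_zero two_ne_zero hφ
  refine (((hasDerivAt_cos φ).const_mul 2).rpow_const (p := -α) (Or.inl h2)).congr_deriv ?_
  rw [rpow_sub_one h2, tan_eq_sin_div_cos]
  field_simp

lemma hasDerivAt_sin_sq_add_tan_sq_rpow_neg (α x : ℝ) {φ : ℝ} (hφ : cos φ ≠ 0)
    (hx : sin x ^ 2 + tan φ ^ 2 ≠ 0) :
    HasDerivAt (fun p => (sin x ^ 2 + tan p ^ 2) ^ (-α / 2))
      (-(α * tan φ) * ((sin x ^ 2 + tan φ ^ 2) ^ (-α / 2) +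
        cos x ^ 2 / (sin x ^ 2 + tan φ ^ 2) ^ (α / 2 + 1))) φ := by
  have hsec : 1 / cos φ ^ 2 = sin x ^ 2 + tan φ ^ 2 + cos x ^ 2 := by
    rw [← inv_one_add_tan_sq hφ, one_div, inv_inv]
    linear_combination -sin_sq_add_cos_sq x
  refine ((((hasDerivAt_tan hφ).fun_pow 2).const_add (sin x ^ 2)).rpow_const
    (p := -α / 2) (Or.inl hx)).congr_deriv ?_
  set q := sin x ^ 2 + tan φ ^ 2
  have hq0 : 0 ≤ q := by positivity
  rw [hsec, show α / 2 + 1 = -(-α / 2 - 1) by ring, rpow_neg hq0, div_inv_eq_mul,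
    rpow_sub_one hx]
  field_simp
  ring

theorem hasDerivAt_dihedralU_phi {l : ℕ} (α : ℝ) {θ φ : ℝ} (hφ : cos φ ≠ 0)
    (hcollision : ∀ j ∈ Icc 1 l, sin (j * π / l - θ) ^ 2 + tan φ ^ 2 ≠ 0) :
    HasDerivAt (dihedralU l α θ)
      (α * tan φ * (2 * cos φ) ^ (-α) * dihedralBalance l α θ φ) φ := by
  refine ((hasDerivAt_two_mul_cos_rpow_neg α hφ).mul
    ((HasDerivAt.fun_sum fun j hj =>
      hasDerivAt_sin_sq_add_tan_sq_rpow_neg α _ hφ (hcollision j hj)).const_add _)).congr_deriv ?_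
  rw [← mul_sum, sum_add_distrib, dihedralBalance]
  ring

theorem antiprism_central_configuration_general {l : ℕ} (hl : 2 ≤ l) {α : ℝ} (hα : 0 ≤ α) :
    (∃! φ, φ ∈ Set.Ioo 0 (π / 2) ∧ dihedralBalance l α (π / (2 * l)) φ = 0) ∧
    ∀ φ ∈ Set.Ioo 0 (π / 2), dihedralBalance l α (π / (2 * l)) φ = 0 →
      deriv (fun θ => dihedralU l α θ φ) (π / (2 * l)) = 0 ∧
      deriv (fun p => dihedralU l α (π / (2 * l)) p) φ = 0 := by
  refine ⟨existsUnique_dihedralBalance_eq_zero hl hα, fun φ hφ hzero =>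
    ⟨deriv_dihedralU_theta_eq_zero l α φ, ?_⟩⟩
  have hcos : 0 < cos φ := cos_pos_of_mem_Ioo ⟨by linarith [hφ.1, pi_pos], hφ.2⟩
  have htan : 0 < tan φ := tan_pos_of_pos_of_lt_pi_div_two hφ.1 hφ.2
  have hderiv := hasDerivAt_dihedralU_phi (l := l) (θ := π / (2 * l)) α hcos.ne'
    fun _ _ => by positivity
  rw [hzero, mul_zero] at hderiv
  exact hderiv.deriv

theorem antiprism_central_configuration (l : ℕ) (hl : 2 ≤ l)
    (α β : ℝ) (hα : α ∈ Set.Ioo (0 : ℝ) 2) (hβ : β = α / 2)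
    (f : ℝ → ℝ)
    (hf : ∀ φ, f φ =
      (∑ j ∈ Finset.Icc 1 (l - 1), Real.sin ((j : ℝ) * Real.pi / l) ^ (-α)) -
        ∑ j ∈ Finset.Icc 1 l,
          Real.cos ((2 * (j : ℝ) - 1) * Real.pi / (2 * l)) ^ 2 /
            (Real.sin ((2 * (j : ℝ) - 1) * Real.pi / (2 * l)) ^ 2 + Real.tan φ ^ 2) ^ (β + 1)) :
    (∃! φhat : ℝ, φhat ∈ Set.Ioo 0 (Real.pi / 2) ∧ f φhat = 0) ∧
    ∀ φhat : ℝ, φhat ∈ Set.Ioo 0 (Real.pi / 2) → f φhat = 0 →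
      deriv (fun t => dihedralU l α t φhat) (Real.pi / (2 * l)) = 0 ∧
      deriv (fun p => dihedralU l α (Real.pi / (2 * l)) p) φhat = 0 := by
  obtain rfl : f = dihedralBalance l α (π / (2 * l)) := by
    funext φ
    simp only [hf, hβ, ← antiprismAngle_eq]
    rfl
  exact antiprism_central_configuration_general hl hα.1.le
end

section
/- Suppose (θ̄, φ̄) with φ̄ ∈ (−π/2, π/2) is not a collision point and is a critical point of U (both partial derivatives vanish there). Then ∂²U/∂θ²(θ̄, φ̄) ≠ 0, ∂²U/∂φ²(θ̄, φ̄) ≠ 0, and the mixed partial ∂²U/∂θ∂φ(θ̄, φ̄) = 0; hence the Hessian matrix of U at (θ̄, φ̄) is nonsingular. Consequently every equilibrium point of the blown-up flow is hyperbolic. -/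
open Real Finset Matrix

open Filter Topology

/-!
Put `x j = 2 * (j * π / l - θ)` and `f y = (1 + 2 * tan φ ^ 2 - y) ^ (-α / 2 - 1)`. Up to a nonzero
factor, `∂U/∂θ` is `∑ j, f (cos (x j)) * sin (x j)`. The numbers `cos (x j)` are the roots of
`T_l - cos (2 * l * θ)`, where `T_l` is the Chebyshev polynomial, and the derivative of this
polynomial at `cos (x j)` is `-l * sin (2 * l * θ) / sin (x j)`. Up to a nonzero constant, the sum
is therefore `sin (2 * l * θ)` times a divided difference of `f`, hence times a value of the
positive function `f^(l-1)`. The resulting bound `|sin (2 * l * θ)| ≲ |∂U/∂θ|`, uniform near the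
critical point, gives both `sin (2 * l * θ) = 0` and `∂²U/∂θ² ≠ 0`.

Since `sin (2 * l * θ) = 0`, the meridian `θ` is fixed by a reflection preserving `U`, and the mixed
derivatives vanish. Along this meridian, `U` is a function of `cos φ ^ 2` with positive second
derivative, which settles `∂²U/∂φ²` off the equator. On the equator the first derivative of that
function decides, and its sign at `θ = π / (2 * l)` is a comparison of two trigonometric sums.

The linearized flow then splits: an eigenvalue `z` satisfies `z = 2 * β * v` or
`z ^ 2 = κ + (β - 1) * v * z` with `κ` real and nonzero. As `v ≠ 0` and `β ∉ {0, 1}`, no purely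
imaginary `z` solves either equation.
-/

section DividedDifferences

theorem exists_eq_zero_of_strictMono_zeros {S : Set ℝ} (hS : S.OrdConnected) {n : ℕ}
    {f : ℕ → ℝ → ℝ} (hf : ∀ k < n, ∀ x ∈ S, HasDerivAt (f k) (f (k + 1) x) x)
    {z : Fin (n + 1) → ℝ} (hz : StrictMono z) (hzS : ∀ i, z i ∈ S) (hfz : ∀ i, f 0 (z i) = 0) :
    ∃ ξ ∈ S, f n ξ = 0 := by
  induction n generalizing f with
  | zero => exact ⟨z 0, hzS 0, hfz 0⟩
  | succ n ih =>
    have rolle (i : Fin (n + 1)) : ∃ y ∈ Set.Ioo (z i.castSucc) (z i.succ), f 1 y = 0 := by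
      have hsub : Set.Icc (z i.castSucc) (z i.succ) ⊆ S := hS.out (hzS _) (hzS _)
      have hderiv : ∀ x ∈ Set.Icc (z i.castSucc) (z i.succ), HasDerivAt (f 0) (f 1 x) x :=
        fun x hx ↦ hf 0 n.succ_pos x (hsub hx)
      exact exists_hasDerivAt_eq_zero (hz i.castSucc_lt_succ)
        (fun x hx ↦ (hderiv x hx).continuousAt.continuousWithinAt) (by rw [hfz, hfz])
        (fun x hx ↦ hderiv x (Set.Ioo_subset_Icc_self hx))
    choose y hy hfy using rolle
    refine ih (f := fun k ↦ f (k + 1)) (fun k hk ↦ hf (k + 1) (by lia)) (z := y) ?_ ?_ hfy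
    · intro i j hij
      calc y i < z i.succ := (hy i).2
        _ ≤ z j.castSucc := hz.monotone (Fin.succ_le_castSucc_iff.2 hij)
        _ < y j := (hy j).1
    · exact fun i ↦ hS.out (hzS _) (hzS _) (Set.Ioo_subset_Icc_self (hy i))

theorem exists_eq_factorial_mul_sum_div_prod_sub {S : Set ℝ} (hS : S.OrdConnected) {n : ℕ}
    {f : ℕ → ℝ → ℝ} (hf : ∀ k < n, ∀ x ∈ S, HasDerivAt (f k) (f (k + 1) x) x)
    {ι : Type*} [DecidableEq ι] {s : Finset ι} (hs : #s = n + 1) {v : ι → ℝ}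
    (hv : Set.InjOn v s) (hvS : ∀ i ∈ s, v i ∈ S) :
    ∃ ξ ∈ S, f n ξ = n.factorial * ∑ i ∈ s, f 0 (v i) / ∏ j ∈ s.erase i, (v i - v j) := by
  set P : Polynomial ℝ := Lagrange.interpolate s v (fun i ↦ f 0 (v i))
  have hPv : ∀ i ∈ s, P.eval (v i) = f 0 (v i) := fun i hi ↦
    Lagrange.eval_interpolate_at_node _ hv hi
  have hcard : #(s.image v) = n + 1 := by rw [card_image_of_injOn hv, hs]
  obtain ⟨ξ, hξ, h⟩ := exists_eq_zero_of_strictMono_zeros hS (n := n)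
    (f := fun k x ↦ f k x - (Polynomial.derivative^[k] P).eval x)
    (fun k hk x hx ↦ (hf k hk x hx).sub <| by
      simpa only [Function.iterate_succ_apply'] using Polynomial.hasDerivAt _ x)
    (z := (s.image v).orderEmbOfFin hcard) (OrderEmbedding.strictMono _)
    (fun i ↦ by
      obtain ⟨j, hj, hji⟩ := mem_image.1 ((s.image v).orderEmbOfFin_mem hcard i)
      exact hji ▸ hvS j hj)
    (fun i ↦ by
      obtain ⟨j, hj, hji⟩ := mem_image.1 ((s.image v).orderEmbOfFin_mem hcard i)
      simp [← hji, hPv j hj])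
  refine ⟨ξ, hξ, ?_⟩
  rw [sub_eq_zero.1 h, Lagrange.eval_iterate_derivative_eq_sum hv
    (Lagrange.degree_interpolate_lt _ hv) (by lia), hs, Nat.sub_self]
  simp only [powersetCard_zero, sum_singleton, prod_empty, mul_one]
  congr 1
  exact sum_congr rfl fun i hi ↦ by rw [hPv i hi]

end DividedDifferences

section ChebyshevNodes

open Polynomial Lagrange

variable {ι : Type*} {s : Finset ι} {x : ι → ℝ} {n : ℕ} {c : ℝ}

theorem C_two_pow_mul_nodal_cos (hs : #s = n + 1) (hx : Set.InjOn (fun i ↦ cos (x i)) s)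
    (hc : ∀ i ∈ s, cos ((n + 1) * x i) = c) :
    C (2 ^ n) * nodal s (fun i ↦ cos (x i)) =
      Chebyshev.T ℝ (n + 1) - C c := by
  have hT : (Chebyshev.T ℝ (n + 1)).degree = #s := by
    rw [Chebyshev.degree_T, hs]
    rfl
  have hcT : (C c).degree < (Chebyshev.T ℝ (n + 1)).degree := by
    refine degree_C_le.trans_lt ?_
    rw [hT, hs]
    exact_mod_cast n.succ_pos
  have hN : (C ((2 : ℝ) ^ n) * nodal s fun i ↦ cos (x i)).degree = #s := by
    rw [degree_C_mul (by positivity), degree_nodal]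
  refine Polynomial.eq_of_degree_le_of_eval_index_eq _ hx hN.le ?_ ?_ fun i hi ↦ ?_
  · rw [hN, degree_sub_eq_left_of_degree_lt hcT, hT]
  · rw [leadingCoeff_mul, leadingCoeff_C, nodal_monic,
      leadingCoeff_sub_of_degree_lt hcT, Chebyshev.leadingCoeff_T, mul_one]
    rfl
  · have hTi := Chebyshev.T_real_cos (x i) (n + 1)
    have hnodal := eval_nodal_at_node (v := fun i ↦ cos (x i)) hi
    push_cast at hTi
    simp [hnodal, hTi, hc i hi]

theorem two_pow_mul_prod_erase_cos_sub_cos_mul_sin [DecidableEq ι] (hs : #s = n + 1)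
    (hx : Set.InjOn (fun i ↦ cos (x i)) s) (hc : ∀ i ∈ s, cos ((n + 1) * x i) = c)
    {i : ι} (hi : i ∈ s) :
    2 ^ n * (∏ j ∈ s.erase i, (cos (x i) - cos (x j))) * sin (x i) =
      (n + 1) * sin ((n + 1) * x i) := by
  have h := congrArg (fun P ↦ (derivative P).eval (cos (x i)))
    (C_two_pow_mul_nodal_cos hs hx hc)
  have hnodal := eval_nodal_derivative_eval_node_eq (v := fun i ↦ cos (x i)) hi
  have hU := Chebyshev.U_real_cos (x i) n
  simp only [derivative_C_mul, hnodal, eval_nodal,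
    derivative_sub, derivative_C, sub_zero, add_sub_cancel_right,
    Chebyshev.T_derivative_eq_U, eval_mul, eval_C, eval_intCast] at h
  push_cast at h hU
  rw [h, mul_assoc, hU]

theorem exists_sum_mul_sin_eq {S : Set ℝ} (hS : S.OrdConnected) {f : ℕ → ℝ → ℝ}
    (hf : ∀ k < n, ∀ y ∈ S, HasDerivAt (f k) (f (k + 1) y) y) (hs : #s = n + 1)
    (hx : Set.InjOn (fun i ↦ cos (x i)) s) (hxS : ∀ i ∈ s, cos (x i) ∈ S)
    (hc : ∀ i ∈ s, cos ((n + 1) * x i) = c) {σ : ℝ} (hσ : ∀ i ∈ s, sin ((n + 1) * x i) = σ) :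
    ∃ ξ ∈ S, 2 ^ n * n.factorial * ∑ i ∈ s, f 0 (cos (x i)) * sin (x i) =
      (n + 1) * σ * f n ξ := by
  classical
  obtain ⟨ξ, hξ, h⟩ := exists_eq_factorial_mul_sum_div_prod_sub hS hf hs hx hxS
  refine ⟨ξ, hξ, ?_⟩
  rw [h, mul_sum, mul_sum, mul_sum]
  refine sum_congr rfl fun i hi ↦ ?_
  have hne : ∏ j ∈ s.erase i, (cos (x i) - cos (x j)) ≠ 0 :=
    prod_ne_zero_iff.2 fun j hj ↦ sub_ne_zero.2 fun h ↦
      ne_of_mem_erase hj (hx (mem_of_mem_erase hj) hi h.symm)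
  have hnode := two_pow_mul_prod_erase_cos_sub_cos_mul_sin hs hx hc hi
  rw [hσ i hi] at hnode
  field_simp
  linear_combination (f 0 (cos (x i))) * hnode

end ChebyshevNodes

section AffinePower

/-- The `k`-th derivative of `y ↦ (a - c * y) ^ (-γ)` on the half-line `0 < a - c * y`. -/
noncomputable def affineRPowDeriv (γ a c : ℝ) (k : ℕ) (y : ℝ) : ℝ :=
  (ascPochhammer ℝ k).eval γ * c ^ k * (a - c * y) ^ (-γ - k)

theorem affineRPowDeriv_zero (γ a c y : ℝ) : affineRPowDeriv γ a c 0 y = (a - c * y) ^ (-γ) := by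
  simp [affineRPowDeriv]

theorem hasDerivAt_affineRPowDeriv (γ : ℝ) {a c y : ℝ} (k : ℕ) (hy : 0 < a - c * y) :
    HasDerivAt (affineRPowDeriv γ a c k) (affineRPowDeriv γ a c (k + 1) y) y := by
  have h := ((((hasDerivAt_id y).const_mul c).const_sub a).rpow_const (p := -γ - k)
    (Or.inl hy.ne')).const_mul ((ascPochhammer ℝ k).eval γ * c ^ k)
  refine h.congr_deriv ?_
  rw [affineRPowDeriv, ascPochhammer_succ_eval, Nat.cast_succ, sub_add_eq_sub_sub, id]
  ring

end AffinePower

section Calculus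

theorem ne_zero_of_isBigO_of_hasDerivAt {f g : ℝ → ℝ} {f' g' x : ℝ} (hgf : g =O[𝓝 x] f)
    (hf : HasDerivAt f f' x) (hfx : f x = 0) (hg : HasDerivAt g g' x) (hg' : g' ≠ 0) : f' ≠ 0 := by
  rintro rfl
  have hgx : g x = 0 := hgf.eq_zero_imp.self_of_nhds hfx
  have hf_o : f =o[𝓝 x] fun y ↦ y - x := by
    simpa only [hasDerivAt_iff_isLittleO, hfx, sub_zero, smul_zero] using hf
  have hg_zero : HasDerivAt g 0 x := by
    simpa only [hasDerivAt_iff_isLittleO, hgx, sub_zero, smul_zero] using hgf.trans_isLittleO hf_o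
  exact hg' (hg.unique hg_zero)

theorem deriv_eq_zero_of_comp_two_mul_sub {g : ℝ → ℝ} {a : ℝ} (h : ∀ t, g (2 * a - t) = g t) :
    deriv g a = 0 := by
  have hderiv := deriv_comp_const_sub (f := g) (2 * a) a
  rw [funext h, show 2 * a - a = a by ring] at hderiv
  linarith

theorem hasDerivAt_comp_cos_sq {H : ℝ → ℝ} {H' p : ℝ} (hH : HasDerivAt H H' (cos p ^ 2)) :
    HasDerivAt (fun p ↦ H (cos p ^ 2)) (-(H' * sin (2 * p))) p := by
  refine (hH.comp p ((hasDerivAt_cos p).fun_pow 2)).congr_deriv ?_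
  rw [sin_two_mul]
  ring

theorem hasDerivAt_comp_cos_sq_mul_sin_two_mul {H : ℝ → ℝ} {H' p : ℝ}
    (hH : HasDerivAt H H' (cos p ^ 2)) :
    HasDerivAt (fun p ↦ -(H (cos p ^ 2) * sin (2 * p)))
      (H' * sin (2 * p) ^ 2 - 2 * H (cos p ^ 2) * cos (2 * p)) p := by
  have hsin : HasDerivAt (fun p ↦ sin (2 * p)) (cos (2 * p) * 2) p := by
    simpa using ((hasDerivAt_id p).const_mul (2 : ℝ)).sin
  refine ((hasDerivAt_comp_cos_sq hH).mul hsin).neg.congr_deriv ?_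
  ring

end Calculus

section TrigonometricSum

theorem injOn_cos_two_mul_nat_mul_pi_div_sub {l : ℕ} {t : ℝ} (ht : sin (2 * l * t) ≠ 0) :
    Set.InjOn (fun j : ℕ ↦ cos (2 * (j * π / l - t))) (Icc 1 l : Finset ℕ) := by
  intro i hi j hj hij
  simp only [coe_Icc, Set.mem_Icc] at hi hj
  have hl : (l : ℝ) ≠ 0 := by exact_mod_cast (by lia : l ≠ 0)
  obtain ⟨k, hk | hk⟩ := cos_eq_cos_iff.1 hij
  · have hkl : (j : ℝ) = i + k * l := by
      field_simp at hk
      exact mul_left_cancel₀ pi_ne_zero (by linear_combination hk)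
    have hkl' : (j : ℤ) = i + k * l := by exact_mod_cast hkl
    have : k = 0 := by nlinarith
    grind
  · refine absurd (sin_eq_zero_iff.2 ⟨i + j - k * l, ?_⟩) ht
    push_cast
    field_simp at hk
    linear_combination hk

theorem exists_sum_rpow_mul_sin_eq (n : ℕ) (γ : ℝ) {Y t : ℝ}
    (ht : ∀ j ∈ Icc 1 (n + 1), cos (2 * (j * π / (n + 1 : ℕ) - t)) < Y)
    (hsin : sin (2 * (n + 1 : ℕ) * t) ≠ 0) :
    ∃ ξ ∈ Set.Ico (-1) Y,
      2 ^ n * n.factorial * ∑ j ∈ Icc 1 (n + 1),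
        (Y - cos (2 * (j * π / (n + 1 : ℕ) - t))) ^ (-γ) * sin (2 * (j * π / (n + 1 : ℕ) - t)) =
      (n + 1) * -sin (2 * (n + 1 : ℕ) * t) *
        ((ascPochhammer ℝ n).eval γ * (Y - ξ) ^ (-γ - n)) := by
  have hangle (j : ℕ) : (n + 1) * (2 * (j * π / (n + 1 : ℕ) - t)) =
      j * (2 * π) - 2 * (n + 1 : ℕ) * t := by
    push_cast
    field_simp
  obtain ⟨ξ, hξ, h⟩ := exists_sum_mul_sin_eq (Set.ordConnected_Ico (a := -1) (b := Y))
    (f := affineRPowDeriv γ Y 1)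
    (fun k _ y hy ↦ hasDerivAt_affineRPowDeriv γ k (by linarith [hy.2])) (Nat.card_Icc _ _)
    (injOn_cos_two_mul_nat_mul_pi_div_sub hsin) (fun j hj ↦ ⟨neg_one_le_cos _, ht j hj⟩)
    (fun j _ ↦ by rw [hangle, cos_nat_mul_two_pi_sub])
    (fun j _ ↦ by rw [hangle, sin_nat_mul_two_pi_sub])
  refine ⟨ξ, hξ, ?_⟩
  simp only [affineRPowDeriv_zero] at h
  simpa only [affineRPowDeriv, one_mul, one_pow, mul_one] using h

theorem exists_pos_mul_abs_sin_le_abs_sum {l : ℕ} (hl : l ≠ 0) {γ Y : ℝ} (hγ : 0 < γ)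
    (hY : -1 < Y) :
    ∃ κ > 0, ∀ t : ℝ, (∀ j ∈ Icc 1 l, cos (2 * (j * π / l - t)) < Y) →
      κ * |sin (2 * l * t)| ≤
        |∑ j ∈ Icc 1 l, (Y - cos (2 * (j * π / l - t))) ^ (-γ) * sin (2 * (j * π / l - t))| := by
  obtain ⟨n, rfl⟩ := Nat.exists_eq_add_one_of_ne_zero hl
  have hY' : 0 < Y + 1 := by linarith
  have hγn := ascPochhammer_pos n γ hγ
  refine ⟨(n + 1) * ((ascPochhammer ℝ n).eval γ * (Y + 1) ^ (-γ - n)) / (2 ^ n * n.factorial),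
    by positivity, fun t ht ↦ ?_⟩
  by_cases hsin : sin (2 * (n + 1 : ℕ) * t) = 0
  · simp only [hsin, abs_zero, mul_zero, abs_nonneg]
  obtain ⟨ξ, ⟨hξ, hξY⟩, h⟩ := exists_sum_rpow_mul_sin_eq n γ ht hsin
  have hY_sub : 0 < Y - ξ := sub_pos.2 hξY
  have hle : (Y + 1) ^ (-γ - n) ≤ (Y - ξ) ^ (-γ - n) :=
    rpow_le_rpow_of_nonpos hY_sub (by linarith) (by linarith [n.cast_nonneg (α := ℝ)])
  replace h := congrArg abs h
  rw [abs_mul, abs_of_pos (by positivity : 0 < 2 ^ n * (n.factorial : ℝ)), abs_mul, abs_mul,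
    abs_neg, abs_of_pos (by positivity : 0 < (n : ℝ) + 1),
    abs_of_pos (by positivity : 0 < (ascPochhammer ℝ n).eval γ * (Y - ξ) ^ (-γ - n))] at h
  rw [div_mul_eq_mul_div, div_le_iff₀' (by positivity), h, mul_right_comm]
  gcongr

end TrigonometricSum

section MirrorSum

/-- The sum of `F` over the angles from the direction `θ` to the `l` mirror lines `j * π / l` of
the dihedral group. -/
noncomputable def mirrorSum (l : ℕ) (F : ℝ → ℝ) (θ : ℝ) : ℝ :=
  ∑ j ∈ Icc 1 l, F (j * π / l - θ)

variable {l : ℕ} {F F' : ℝ → ℝ} {θ : ℝ}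

theorem mirrorSum_eq_sum_range (l : ℕ) (F : ℝ → ℝ) (θ : ℝ) :
    mirrorSum l F θ = ∑ i ∈ range l, F ((i + 1 : ℕ) * π / l - θ) := by
  rw [mirrorSum, ← Ico_add_one_right_eq_Icc, sum_Ico_eq_sum_range]
  simp only [add_tsub_cancel_right, add_comm 1]

theorem mirrorSum_nonneg (hF : ∀ u, 0 ≤ F u) : 0 ≤ mirrorSum l F θ :=
  sum_nonneg fun _ _ ↦ hF _

theorem mirrorSum_periodic (hl : l ≠ 0) (hF : Function.Periodic F π) :
    Function.Periodic (mirrorSum l F) (π / l) := by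
  intro θ
  have hshift (i : ℕ) : ((i + 1 : ℕ) : ℝ) * π / l - (θ + π / l) = i * π / l - θ := by
    push_cast
    ring
  have hend : F (l * π / l - θ) = F ((0 : ℕ) * π / l - θ) := by
    rw [mul_div_cancel_left₀ _ (Nat.cast_ne_zero.2 hl), sub_eq_neg_add, hF]
    simp
  simp only [mirrorSum_eq_sum_range, hshift]
  have h := sum_range_succ (fun i : ℕ ↦ F (i * π / l - θ)) l
  rw [sum_range_succ', hend] at h
  exact (add_right_cancel h).symm

theorem mirrorSum_neg (hl : l ≠ 0) (hF : Function.Periodic F π) (hF_even : F.Even) (θ : ℝ) :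
    mirrorSum l F (-θ) = mirrorSum l F θ := by
  rw [← mirrorSum_periodic hl hF θ]
  simp only [mirrorSum_eq_sum_range]
  rw [← sum_range_reflect]
  refine sum_congr rfl fun i hi ↦ ?_
  have hi : i < l := mem_range.1 hi
  have hcast : ((l - 1 - i + 1 : ℕ) : ℝ) = l - i := by
    rw [show l - 1 - i + 1 = l - i by lia, Nat.cast_sub hi.le]
  rw [← hF_even, ← hF, hcast]
  congr 1
  have : (l : ℝ) ≠ 0 := Nat.cast_ne_zero.2 hl
  push_cast
  field_simp
  ring

theorem mirrorSum_two_mul_sub (hl : l ≠ 0) (hF : Function.Periodic F π) (hF_even : F.Even)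
    (hθ : sin (2 * l * θ) = 0) (t : ℝ) : mirrorSum l F (2 * θ - t) = mirrorSum l F t := by
  obtain ⟨m, hm⟩ := sin_eq_zero_iff.1 hθ
  have hl' : (l : ℝ) ≠ 0 := Nat.cast_ne_zero.2 hl
  have ht : 2 * θ - t = -t + m * (π / l) := by
    field_simp
    linear_combination -hm
  rw [ht, (mirrorSum_periodic hl hF).int_mul m, mirrorSum_neg hl hF hF_even]

theorem mirrorSum_eq_of_forall_ne (hl : l ≠ 0) (hF : Function.Periodic F π)
    (hθ : sin (2 * l * θ) = 0) (hne : ∀ k : ℤ, θ ≠ k * (π / l)) :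
    mirrorSum l F θ = mirrorSum l F (π / (2 * l)) := by
  obtain ⟨m, hm⟩ := sin_eq_zero_iff.1 hθ
  have hl' : (l : ℝ) ≠ 0 := Nat.cast_ne_zero.2 hl
  obtain ⟨k, rfl | rfl⟩ := m.even_or_odd'
  · refine absurd ?_ (hne k)
    push_cast at hm
    field_simp
    linear_combination -hm / 2
  · have hθk : θ = π / (2 * l) + k * (π / l) := by
      push_cast at hm
      field_simp
      linear_combination -hm
    rw [hθk, (mirrorSum_periodic hl hF).int_mul k]

theorem two_mul_le_mirrorSum_pi_div (hl : 2 ≤ l) (hF : Function.Periodic F π) (hF_even : F.Even)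
    (hF_nonneg : ∀ u, 0 ≤ F u) : 2 * F (π / (2 * l)) ≤ mirrorSum l F (π / (2 * l)) := by
  have hl' : (l : ℝ) ≠ 0 := by positivity
  have hfirst : F ((1 : ℕ) * π / l - π / (2 * l)) = F (π / (2 * l)) := by
    congr 1
    field_simp
    norm_num
  have hlast : F (l * π / l - π / (2 * l)) = F (π / (2 * l)) := by
    rw [mul_div_cancel_left₀ _ hl', sub_eq_neg_add, hF, hF_even]
  calc 2 * F (π / (2 * l)) = ∑ j ∈ {1, l}, F (j * π / l - π / (2 * l)) := by
        rw [sum_pair (by lia), hfirst, hlast, two_mul]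
    _ ≤ mirrorSum l F (π / (2 * l)) :=
        sum_le_sum_of_subset_of_nonneg (by grind) fun _ _ _ ↦ hF_nonneg _

theorem hasDerivAt_mirrorSum
    (hF : ∀ j ∈ Icc 1 l, HasDerivAt F (F' (j * π / l - θ)) (j * π / l - θ)) :
    HasDerivAt (mirrorSum l F) (-mirrorSum l F' θ) θ := by
  rw [mirrorSum, ← sum_neg_distrib]
  exact HasDerivAt.fun_sum fun j hj ↦ (hF j hj).comp_const_sub _ _

end MirrorSum

section RotationSum

/-- The interaction of a body with its images under the `l - 1` nontrivial rotations of the dihedral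
group, up to the factor `(2 * cos φ) ^ (-α)`. -/
noncomputable def rotationSum (l : ℕ) (α : ℝ) : ℝ :=
  ∑ j ∈ Icc 1 (l - 1), sin (j * π / l) ^ (-α)

variable {l : ℕ} {α : ℝ}

theorem sin_pi_div_two_mul_pos (hl : l ≠ 0) : 0 < sin (π / (2 * l)) := by
  have hl' : (1 : ℝ) ≤ l := by exact_mod_cast Nat.one_le_iff_ne_zero.2 hl
  refine sin_pos_of_pos_of_lt_pi (by positivity) ?_
  rw [div_lt_iff₀ (by positivity)]
  nlinarith [pi_pos]

theorem sin_pi_div_two_mul_le_sin {j : ℕ} (hj : j ∈ Icc 1 (l - 1)) :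
    sin (π / (2 * l)) ≤ sin (j * π / l) := by
  obtain ⟨hj1, hjl⟩ := mem_Icc.1 hj
  have hj1' : (1 : ℝ) ≤ j := by exact_mod_cast hj1
  have hjl' : (j : ℝ) + 1 ≤ l := by exact_mod_cast (by lia : j + 1 ≤ l)
  have hl : (0 : ℝ) < l := by linarith
  have hlower : π / (2 * l) ≤ j * π / l := by
    rw [div_le_div_iff₀ (by positivity) hl]
    nlinarith [mul_pos pi_pos hl]
  have hupper : π / (2 * l) ≤ π - j * π / l := by
    rw [show π - j * π / l = (l - j) * π / l by field_simp, div_le_div_iff₀ (by positivity) hl]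
    nlinarith [mul_pos pi_pos hl]
  have hpos : 0 ≤ π / (2 * l) := by positivity
  rcases le_total (j * π / l) (π / 2) with h | h
  · exact sin_le_sin_of_le_of_le_pi_div_two (by linarith) h hlower
  · rw [← sin_pi_sub (j * π / l)]
    exact sin_le_sin_of_le_of_le_pi_div_two (by linarith) (by linarith) hupper

theorem rotationSum_pos (hl : 2 ≤ l) : 0 < rotationSum l α := by
  refine sum_pos (fun j hj ↦ rpow_pos_of_pos ?_ _) (nonempty_Icc.2 (by lia))
  exact (sin_pi_div_two_mul_pos (by lia)).trans_le (sin_pi_div_two_mul_le_sin hj)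

theorem rotationSum_le (hl : l ≠ 0) (hα : 0 ≤ α) :
    rotationSum l α ≤ (l - 1) * sin (π / (2 * l)) ^ (-α) := by
  calc rotationSum l α ≤ #(Icc 1 (l - 1)) • sin (π / (2 * l)) ^ (-α) :=
        sum_le_card_nsmul _ _ _ fun j hj ↦ rpow_le_rpow_of_nonpos (sin_pi_div_two_mul_pos hl)
          (sin_pi_div_two_mul_le_sin hj) (neg_nonpos.2 hα)
    _ = (l - 1) * sin (π / (2 * l)) ^ (-α) := by
        rw [nsmul_eq_mul, Nat.card_Icc, Nat.add_sub_cancel, Nat.cast_pred (by lia)]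

theorem add_one_mul_sin_pi_div_two_mul_sq_lt_two (hl : 2 ≤ l) :
    (l + 1) * sin (π / (2 * l)) ^ 2 < 2 := by
  have hl' : (2 : ℝ) ≤ l := by exact_mod_cast hl
  have hsin : sin (π / (2 * l)) ^ 2 ≤ (π / (2 * l)) ^ 2 :=
    pow_le_pow_left₀ (sin_pi_div_two_mul_pos (by lia)).le (sin_le (by positivity)) 2
  have hpi : π ^ 2 < 10 := by nlinarith [pi_lt_d2, pi_pos]
  calc (l + 1) * sin (π / (2 * l)) ^ 2 ≤ (l + 1) * (π / (2 * l)) ^ 2 := by gcongr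
    _ = (l + 1) * π ^ 2 / (2 * l) ^ 2 := by rw [div_pow, mul_div_assoc]
    _ < 2 := by
        rw [div_lt_iff₀ (by positivity)]
        nlinarith

theorem rotationSum_lt_mirrorSum (hl : 2 ≤ l) (hα : 0 ≤ α) :
    rotationSum l α <
      mirrorSum l (fun u ↦ cos u ^ 2 * (sin u ^ 2) ^ (-(α / 2) - 1)) (π / (2 * l)) := by
  set s := sin (π / (2 * l)) with hs
  have hs_pos : 0 < s := sin_pi_div_two_mul_pos (by lia)
  have hpow : (s ^ 2) ^ (-(α / 2) - 1) = s ^ (-α) / s ^ 2 := by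
    rw [rpow_sub_one (by positivity), ← rpow_natCast_mul hs_pos.le]
    ring_nf
  calc rotationSum l α ≤ (l - 1) * s ^ (-α) := rotationSum_le (by lia) hα
    _ < 2 * (1 - s ^ 2) / s ^ 2 * s ^ (-α) := by
        gcongr
        rw [lt_div_iff₀ (by positivity)]
        linarith [add_one_mul_sin_pi_div_two_mul_sq_lt_two hl]
    _ = 2 * (cos (π / (2 * l)) ^ 2 * (s ^ 2) ^ (-(α / 2) - 1)) := by
        rw [hpow, cos_sq', ← hs]
        ring
    _ ≤ _ := two_mul_le_mirrorSum_pi_div (F := fun u ↦ cos u ^ 2 * (sin u ^ 2) ^ (-(α / 2) - 1)) hl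
        (fun u ↦ by simp) (fun u ↦ by simp) fun u ↦ by positivity

end RotationSum

section MirrorKernel

/-- The interaction of a body with its image under one reflection, up to the factor
`(2 * cos φ) ^ (-α)`: `u` is the angle to the mirror line and `T = tan φ ^ 2`. -/
noncomputable def mirrorKernel (α T u : ℝ) : ℝ :=
  (sin u ^ 2 + T) ^ (-α / 2)

/-- The derivative of `mirrorKernel α T` where `sin u ^ 2 + T` is positive. -/
noncomputable def mirrorKernelDeriv (α T u : ℝ) : ℝ :=
  -α / 2 * ((sin u ^ 2 + T) ^ (-α / 2 - 1) * sin (2 * u))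

variable {α T u θ : ℝ} {l : ℕ}

theorem mirrorKernel_periodic (α T : ℝ) : Function.Periodic (mirrorKernel α T) π := fun u ↦ by
  simp only [mirrorKernel, sin_add_pi, neg_sq]

theorem mirrorKernel_even (α T : ℝ) : (mirrorKernel α T).Even := fun u ↦ by
  simp only [mirrorKernel, sin_neg, neg_sq]

theorem mirrorKernel_nonneg (hT : 0 ≤ T) (u : ℝ) : 0 ≤ mirrorKernel α T u := by
  unfold mirrorKernel
  positivity

theorem hasDerivAt_mirrorKernel (hu : 0 < sin u ^ 2 + T) :
    HasDerivAt (mirrorKernel α T) (mirrorKernelDeriv α T u) u := by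
  have h := (((hasDerivAt_sin u).pow 2).add_const T).rpow_const (p := -α / 2) (Or.inl hu.ne')
  refine h.congr_deriv ?_
  rw [mirrorKernelDeriv, sin_two_mul, Pi.pow_apply]
  ring

theorem differentiableAt_mirrorKernelDeriv (hu : 0 < sin u ^ 2 + T) :
    DifferentiableAt ℝ (mirrorKernelDeriv α T) u := by
  unfold mirrorKernelDeriv
  fun_prop (disch := exact Or.inl hu.ne')

theorem hasDerivAt_mirrorSum_mirrorKernel
    (hθ : ∀ j ∈ Icc 1 l, 0 < sin (j * π / l - θ) ^ 2 + T) :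
    HasDerivAt (mirrorSum l (mirrorKernel α T)) (-mirrorSum l (mirrorKernelDeriv α T) θ) θ :=
  hasDerivAt_mirrorSum fun j hj ↦ hasDerivAt_mirrorKernel (hθ j hj)

theorem eventually_forall_sin_sq_add_pos
    (hθ : ∀ j ∈ Icc 1 l, 0 < sin (j * π / l - θ) ^ 2 + T) :
    ∀ᶠ t in 𝓝 θ, ∀ j ∈ Icc 1 l, 0 < sin (j * π / l - t) ^ 2 + T := by
  refine (eventually_all_finset _).2 fun j hj ↦ ?_
  have hcont : Continuous fun t ↦ sin (j * π / l - t) ^ 2 + T := by fun_prop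
  exact hcont.continuousAt.eventually_const_lt (hθ j hj)

theorem exists_pos_mul_abs_sin_le_abs_mirrorSum (hl : l ≠ 0) (hα : 0 < α) (hT : 0 ≤ T) :
    ∃ κ > 0, ∀ t : ℝ, (∀ j ∈ Icc 1 l, 0 < sin (j * π / l - t) ^ 2 + T) →
      κ * |sin (2 * l * t)| ≤ |mirrorSum l (mirrorKernelDeriv α T) t| := by
  obtain ⟨κ, hκ, h⟩ := exists_pos_mul_abs_sin_le_abs_sum hl (γ := α / 2 + 1) (Y := 1 + 2 * T)
    (by positivity) (by linarith)
  have hdouble (u : ℝ) : sin u ^ 2 + T = (1 + 2 * T - cos (2 * u)) / 2 := by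
    rw [cos_two_mul, cos_sq']
    ring
  set C := α / 2 * 2 ^ (α / 2 + 1) with hC
  have hC_pos : 0 < C := by positivity
  have hkernel {u : ℝ} (hu : 0 < sin u ^ 2 + T) : mirrorKernelDeriv α T u =
      -C * ((1 + 2 * T - cos (2 * u)) ^ (-(α / 2 + 1)) * sin (2 * u)) := by
    rw [hdouble, div_pos_iff_of_pos_right two_pos] at hu
    rw [mirrorKernelDeriv, hdouble, show -α / 2 - 1 = -(α / 2 + 1) by ring,
      div_rpow hu.le two_pos.le, rpow_neg two_pos.le, hC]
    field_simp
  refine ⟨C * κ, by positivity, fun t ht ↦ ?_⟩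
  rw [mirrorSum, sum_congr rfl fun j hj ↦ hkernel (ht j hj), ← mul_sum, abs_mul, abs_neg,
    abs_of_pos hC_pos, mul_assoc]
  gcongr
  refine h t fun j hj ↦ ?_
  linarith [hdouble (j * π / l - t), ht j hj]

theorem isBigO_sin_mirrorSum_mirrorKernelDeriv (hl : l ≠ 0) (hα : 0 < α) (hT : 0 ≤ T)
    (hθ : ∀ j ∈ Icc 1 l, 0 < sin (j * π / l - θ) ^ 2 + T) :
    (fun t ↦ sin (2 * l * t)) =O[𝓝 θ] mirrorSum l (mirrorKernelDeriv α T) := by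
  obtain ⟨κ, hκ, h⟩ := exists_pos_mul_abs_sin_le_abs_mirrorSum hl hα hT
  refine Asymptotics.IsBigO.of_bound κ⁻¹ ?_
  filter_upwards [eventually_forall_sin_sq_add_pos hθ] with t ht
  rw [norm_eq_abs, norm_eq_abs, ← div_eq_inv_mul, le_div_iff₀' hκ]
  exact h t ht

end MirrorKernel

section ReducedPotential

variable {l : ℕ} {α θ φ : ℝ}

theorem dihedralU_eq (l : ℕ) (α θ φ : ℝ) :
    dihedralU l α θ φ =
      (2 * cos φ) ^ (-α) * (rotationSum l α + mirrorSum l (mirrorKernel α (tan φ ^ 2)) θ) := rfl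

theorem dihedralU_pos (hl : 2 ≤ l) (hφ : 0 < cos φ) : 0 < dihedralU l α θ φ := by
  rw [dihedralU_eq]
  have h := rotationSum_pos (α := α) hl
  have h' := mirrorSum_nonneg (l := l) (θ := θ) (mirrorKernel_nonneg (α := α) (sq_nonneg (tan φ)))
  positivity

theorem sin_sq_add_tan_sq_pos (hl : l ≠ 0) (hφ : φ ∈ Set.Ioo (-(π / 2)) (π / 2))
    (hnc : ¬(φ = 0 ∧ ∃ k : ℤ, θ = k * (π / l))) (j : ℕ) :
    0 < sin (j * π / l - θ) ^ 2 + tan φ ^ 2 := by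
  refine (by positivity : 0 ≤ sin (j * π / l - θ) ^ 2 + tan φ ^ 2).lt_of_ne' fun h ↦ hnc ?_
  rw [add_eq_zero_iff_of_nonneg (sq_nonneg _) (sq_nonneg _), sq_eq_zero_iff, sq_eq_zero_iff] at h
  have hl' : (l : ℝ) ≠ 0 := Nat.cast_ne_zero.2 hl
  obtain ⟨m, hm⟩ := sin_eq_zero_iff.1 h.1
  refine ⟨injOn_tan hφ ⟨by simp [pi_pos], by positivity⟩ (by rw [h.2, tan_zero]), j - m * l, ?_⟩
  push_cast
  field_simp at hm ⊢
  linear_combination hm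

theorem hasDerivAt_dihedralU_left (hθ : ∀ j ∈ Icc 1 l, 0 < sin (j * π / l - θ) ^ 2 + tan φ ^ 2) :
    HasDerivAt (fun t ↦ dihedralU l α t φ)
      (-(2 * cos φ) ^ (-α) * mirrorSum l (mirrorKernelDeriv α (tan φ ^ 2)) θ) θ :=
  (((hasDerivAt_mirrorSum_mirrorKernel hθ).const_add _).const_mul _).congr_deriv (by ring)

theorem sin_eq_zero_and_deriv_deriv_dihedralU_left_ne_zero (hl : l ≠ 0) (hα : 0 < α)
    (hφ : 0 < cos φ) (hθ : ∀ j ∈ Icc 1 l, 0 < sin (j * π / l - θ) ^ 2 + tan φ ^ 2)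
    (hcrit : deriv (fun t ↦ dihedralU l α t φ) θ = 0) :
    sin (2 * l * θ) = 0 ∧ deriv (deriv fun t ↦ dihedralU l α t φ) θ ≠ 0 := by
  set G := mirrorSum l (mirrorKernelDeriv α (tan φ ^ 2))
  have hA : -(2 * cos φ) ^ (-α) ≠ 0 := by
    have := rpow_pos_of_pos (by positivity : 0 < 2 * cos φ) (-α)
    exact neg_ne_zero.2 this.ne'
  have hO : (fun t ↦ sin (2 * l * t)) =O[𝓝 θ] G :=
    isBigO_sin_mirrorSum_mirrorKernelDeriv hl hα (sq_nonneg _) hθ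
  have hG : G θ = 0 := by
    simpa only [(hasDerivAt_dihedralU_left hθ).deriv, mul_eq_zero, hA, false_or] using hcrit
  have hsin : sin (2 * l * θ) = 0 := hO.eq_zero_imp.self_of_nhds hG
  have hG' : HasDerivAt G _ θ := hasDerivAt_mirrorSum fun j hj ↦
    (differentiableAt_mirrorKernelDeriv (hθ j hj)).hasDerivAt
  have hderiv : deriv (fun t ↦ dihedralU l α t φ) =ᶠ[𝓝 θ] fun t ↦ -(2 * cos φ) ^ (-α) * G t := by
    filter_upwards [eventually_forall_sin_sq_add_pos hθ] with t ht
    exact (hasDerivAt_dihedralU_left ht).deriv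
  have hsin' : HasDerivAt (fun t ↦ sin (2 * l * t)) (cos (2 * l * θ) * (2 * l)) θ := by
    simpa using ((hasDerivAt_id θ).const_mul (2 * l : ℝ)).sin
  have hcos : cos (2 * l * θ) ≠ 0 := fun h ↦ by simpa [hsin, h] using sin_sq_add_cos_sq (2 * l * θ)
  refine ⟨hsin, ?_⟩
  rw [hderiv.deriv_eq, (hG'.const_mul _).deriv]
  exact mul_ne_zero hA (ne_zero_of_isBigO_of_hasDerivAt hO hG' hG hsin' (by positivity))

theorem dihedralU_two_mul_sub (hl : l ≠ 0) (hθ : sin (2 * l * θ) = 0) (t p : ℝ) :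
    dihedralU l α (2 * θ - t) p = dihedralU l α t p := by
  rw [dihedralU_eq, dihedralU_eq,
    mirrorSum_two_mul_sub hl (mirrorKernel_periodic _ _) (mirrorKernel_even _ _) hθ]

end ReducedPotential

section Meridian

/-- The `k`-th derivative in `x = cos φ ^ 2` of the potential along the meridian `θ`, up to the
factor `2 ^ (-α)`. -/
noncomputable def meridianProfile (l : ℕ) (α θ : ℝ) (k : ℕ) (x : ℝ) : ℝ :=
  rotationSum l α * affineRPowDeriv (α / 2) 0 (-1) k x +
    mirrorSum l (fun u ↦ affineRPowDeriv (α / 2) 1 (cos u ^ 2) k x) θ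

variable {l : ℕ} {α θ φ x : ℝ}

theorem hasDerivAt_meridianProfile (k : ℕ) (hx : 0 < x)
    (hθ : ∀ j ∈ Icc 1 l, 0 < 1 - cos (j * π / l - θ) ^ 2 * x) :
    HasDerivAt (meridianProfile l α θ k) (meridianProfile l α θ (k + 1) x) x :=
  ((hasDerivAt_affineRPowDeriv _ k (by linarith)).const_mul _).add <|
    HasDerivAt.fun_sum fun j hj ↦ hasDerivAt_affineRPowDeriv _ k (hθ j hj)

theorem cos_sq_mul_sin_sq_add_tan_sq (hφ : cos φ ≠ 0) (u : ℝ) :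
    cos φ ^ 2 * (sin u ^ 2 + tan φ ^ 2) = 1 - cos u ^ 2 * cos φ ^ 2 := by
  rw [tan_eq_sin_div_cos]
  field_simp
  rw [sin_sq, sin_sq]
  ring

theorem dihedralU_eq_meridianProfile (hφ : 0 < cos φ) :
    dihedralU l α θ φ = 2 ^ (-α) * meridianProfile l α θ 0 (cos φ ^ 2) := by
  have hpow : (2 * cos φ) ^ (-α) = 2 ^ (-α) * (cos φ ^ 2) ^ (-α / 2) := by
    rw [mul_rpow two_pos.le hφ.le, ← rpow_natCast_mul hφ.le]
    ring_nf
  have hkernel (u : ℝ) : (cos φ ^ 2) ^ (-α / 2) * mirrorKernel α (tan φ ^ 2) u =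
      affineRPowDeriv (α / 2) 1 (cos u ^ 2) 0 (cos φ ^ 2) := by
    rw [mirrorKernel, ← mul_rpow (by positivity) (by positivity), affineRPowDeriv_zero, neg_div,
      cos_sq_mul_sin_sq_add_tan_sq hφ.ne']
  rw [dihedralU_eq, hpow, mul_assoc, mul_add, meridianProfile, affineRPowDeriv_zero, mirrorSum,
    mirrorSum, mul_sum, sum_congr rfl fun j _ ↦ hkernel _, neg_div, mul_comm (rotationSum l α),
    neg_one_mul, zero_sub, neg_neg]

theorem meridianProfile_two_pos (hl : 2 ≤ l) (hα : 0 < α) (hx : 0 < x)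
    (hθ : ∀ j ∈ Icc 1 l, 0 < 1 - cos (j * π / l - θ) ^ 2 * x) :
    0 < meridianProfile l α θ 2 x := by
  have hpoch := ascPochhammer_pos 2 (α / 2) (by positivity)
  refine add_pos_of_pos_of_nonneg (mul_pos (rotationSum_pos hl) ?_) (sum_nonneg fun j hj ↦ ?_)
  · unfold affineRPowDeriv
    have : 0 < 0 - -1 * x := by linarith
    positivity
  · unfold affineRPowDeriv
    have := hθ j hj
    positivity

theorem meridianProfile_one_one (l : ℕ) (α θ : ℝ) :
    meridianProfile l α θ 1 1 =
      α / 2 * (mirrorSum l (fun u ↦ cos u ^ 2 * (sin u ^ 2) ^ (-(α / 2) - 1)) θ -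
        rotationSum l α) := by
  simp only [meridianProfile, mirrorSum, affineRPowDeriv, ascPochhammer_one, Polynomial.eval_X,
    pow_one, Nat.cast_one, mul_one, ← sin_sq, mul_assoc, ← mul_sum]
  rw [neg_one_mul, zero_sub, neg_neg, one_rpow]
  ring

theorem meridianProfile_one_one_pos (hl : 2 ≤ l) (hα : 0 < α) (hθ : sin (2 * l * θ) = 0)
    (hne : ∀ k : ℤ, θ ≠ k * (π / l)) : 0 < meridianProfile l α θ 1 1 := by
  have hper : Function.Periodic (fun u ↦ cos u ^ 2 * (sin u ^ 2) ^ (-(α / 2) - 1)) π :=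
    fun u ↦ by simp
  rw [meridianProfile_one_one, mirrorSum_eq_of_forall_ne (by lia) hper hθ hne]
  exact mul_pos (by positivity) (sub_pos.2 (rotationSum_lt_mirrorSum hl hα.le))

theorem one_sub_cos_sq_mul_cos_sq_pos (hφ : 0 < cos φ)
    (hθ : ∀ j ∈ Icc 1 l, 0 < sin (j * π / l - θ) ^ 2 + tan φ ^ 2) :
    ∀ j ∈ Icc 1 l, 0 < 1 - cos (j * π / l - θ) ^ 2 * cos φ ^ 2 := by
  intro j hj
  rw [← cos_sq_mul_sin_sq_add_tan_sq hφ.ne']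
  exact mul_pos (by positivity) (hθ j hj)

theorem hasDerivAt_dihedralU_right (hφ : 0 < cos φ)
    (hθ : ∀ j ∈ Icc 1 l, 0 < sin (j * π / l - θ) ^ 2 + tan φ ^ 2) :
    HasDerivAt (fun p ↦ dihedralU l α θ p)
      (-(2 ^ (-α) * meridianProfile l α θ 1 (cos φ ^ 2) * sin (2 * φ))) φ := by
  refine (hasDerivAt_comp_cos_sq ((hasDerivAt_meridianProfile 0 (by positivity)
    (one_sub_cos_sq_mul_cos_sq_pos hφ hθ)).const_mul (2 ^ (-α)))).congr_of_eventuallyEq ?_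
  filter_upwards [continuous_cos.continuousAt.eventually_const_lt hφ] with p hp
  exact dihedralU_eq_meridianProfile hp

theorem deriv_deriv_dihedralU_right (hφ : 0 < cos φ)
    (hθ : ∀ j ∈ Icc 1 l, 0 < sin (j * π / l - θ) ^ 2 + tan φ ^ 2) :
    deriv (deriv fun p ↦ dihedralU l α θ p) φ =
      2 ^ (-α) * (meridianProfile l α θ 2 (cos φ ^ 2) * sin (2 * φ) ^ 2 -
        2 * meridianProfile l α θ 1 (cos φ ^ 2) * cos (2 * φ)) := by
  have hderiv : deriv (fun p ↦ dihedralU l α θ p) =ᶠ[𝓝 φ] fun p ↦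
      -(2 ^ (-α) * meridianProfile l α θ 1 (cos p ^ 2) * sin (2 * p)) := by
    have htan : ContinuousAt tan φ := continuousAt_tan.2 hφ.ne'
    have hev : ∀ᶠ p in 𝓝 φ, ∀ j ∈ Icc 1 l, 0 < sin (j * π / l - θ) ^ 2 + tan p ^ 2 :=
      (eventually_all_finset _).2 fun j hj ↦
        (continuousAt_const.add (htan.pow 2)).eventually_const_lt (hθ j hj)
    filter_upwards [hev, continuous_cos.continuousAt.eventually_const_lt hφ] with p hp hcos
    exact (hasDerivAt_dihedralU_right hcos hp).deriv
  have hprofile := (hasDerivAt_meridianProfile (α := α) 1 (by positivity : 0 < cos φ ^ 2)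
    (one_sub_cos_sq_mul_cos_sq_pos hφ hθ)).const_mul (2 ^ (-α))
  rw [hderiv.deriv_eq, (hasDerivAt_comp_cos_sq_mul_sin_two_mul hprofile).deriv]
  ring

theorem deriv_deriv_dihedralU_right_ne_zero (hl : 2 ≤ l) (hα : 0 < α)
    (hφ : φ ∈ Set.Ioo (-(π / 2)) (π / 2)) (hnc : ¬(φ = 0 ∧ ∃ k : ℤ, θ = k * (π / l)))
    (hsin : sin (2 * l * θ) = 0) (hcrit : deriv (fun p ↦ dihedralU l α θ p) φ = 0) :
    deriv (deriv fun p ↦ dihedralU l α θ p) φ ≠ 0 := by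
  have hcos : 0 < cos φ := cos_pos_of_mem_Ioo hφ
  have hθ : ∀ j ∈ Icc 1 l, 0 < sin (j * π / l - θ) ^ 2 + tan φ ^ 2 :=
    fun j _ ↦ sin_sq_add_tan_sq_pos (by lia) hφ hnc j
  have h2 : (2 : ℝ) ^ (-α) ≠ 0 := by positivity
  rw [deriv_deriv_dihedralU_right hcos hθ]
  refine mul_ne_zero h2 ?_
  by_cases hφ0 : φ = 0
  · subst hφ0
    have hpos := meridianProfile_one_one_pos hl hα hsin fun k hk ↦ hnc ⟨rfl, k, hk⟩
    simpa using hpos.ne'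
  · have hsin2 : sin (2 * φ) ≠ 0 := by
      rw [Ne, sin_eq_zero_iff_of_lt_of_lt (by linarith [hφ.1]) (by linarith [hφ.2])]
      simpa using hφ0
    have hprofile : meridianProfile l α θ 1 (cos φ ^ 2) = 0 := by
      simpa [(hasDerivAt_dihedralU_right hcos hθ).deriv, h2, hsin2] using hcrit
    have hpos := meridianProfile_two_pos hl hα (by positivity)
      (one_sub_cos_sq_mul_cos_sq_pos hcos hθ)
    rw [hprofile, mul_zero, zero_mul, sub_zero]
    positivity

end Meridian

section BlownUpFlow

/-- The linearization of the blown-up flow at an equilibrium with radial velocity `v`, where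
`!![a, b; c, d]` is the derivative of the force in the shape coordinates `(θ, φ)`. -/
def blowUpLinearization (β v a b c d : ℝ) : Matrix (Fin 5) (Fin 5) ℝ :=
  !![2 * β * v, 0, 0, 0, 0;
     0, 0, 0, 1, 0;
     0, 0, 0, 0, 1;
     0, a, b, (β - 1) * v, 0;
     0, c, d, 0, (β - 1) * v]

theorem re_ne_zero_of_sq_eq {κ μ : ℝ} (hκ : κ ≠ 0) (hμ : μ ≠ 0) {z : ℂ}
    (hz : z ^ 2 = κ + μ * z) : z.re ≠ 0 := by
  intro hre
  have him : z.im = 0 := by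
    simpa [sq, hre, hμ] using congrArg Complex.im hz
  refine hκ ?_
  simpa [sq, hre, him] using (congrArg Complex.re hz).symm

variable {β v a d : ℝ} {z : ℂ}

theorem eq_or_sq_eq_of_hasEigenvalue_blowUpLinearization
    (h : Module.End.HasEigenvalue
      (Matrix.toLin' ((blowUpLinearization β v a 0 0 d).map (Complex.ofReal ·))) z) :
    z = 2 * β * v ∨ z ^ 2 = a + ((β - 1) * v : ℝ) * z ∨ z ^ 2 = d + ((β - 1) * v : ℝ) * z := by
  obtain ⟨x, hx⟩ := h.exists_hasEigenvector
  have hMx := hx.apply_eq_smul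
  rw [Matrix.toLin'_apply] at hMx
  have hrow (i : Fin 5) := congrFun hMx i
  simp only [blowUpLinearization, Matrix.mulVec, dotProduct, Fin.sum_univ_five] at hrow
  have h0 : 2 * β * v * x 0 = z * x 0 := by simpa using hrow 0
  have h1 : x 3 = z * x 1 := by simpa using hrow 1
  have h2 : x 4 = z * x 2 := by simpa using hrow 2
  have h3 : a * x 1 + ((β - 1) * v : ℝ) * x 3 = z * x 3 := by simpa using hrow 3
  have h4 : d * x 2 + ((β - 1) * v : ℝ) * x 4 = z * x 4 := by simpa using hrow 4
  by_contra! hz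
  have hx0 : x 0 = 0 := by
    by_contra hne
    exact hz.1 (mul_right_cancel₀ hne h0).symm
  have hx1 : x 1 = 0 := by
    by_contra hne
    exact hz.2.1 (mul_right_cancel₀ hne (by rw [h1] at h3; linear_combination -h3))
  have hx2 : x 2 = 0 := by
    by_contra hne
    exact hz.2.2 (mul_right_cancel₀ hne (by rw [h2] at h4; linear_combination -h4))
  refine hx.2 (funext fun i ↦ ?_)
  fin_cases i <;> simp [h1, h2, hx0, hx1, hx2]

theorem re_ne_zero_of_hasEigenvalue_blowUpLinearization (hβ0 : β ≠ 0) (hβ1 : β ≠ 1) (hv : v ≠ 0)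
    (ha : a ≠ 0) (hd : d ≠ 0)
    (h : Module.End.HasEigenvalue
      (Matrix.toLin' ((blowUpLinearization β v a 0 0 d).map (Complex.ofReal ·))) z) :
    z.re ≠ 0 := by
  have hμ : (β - 1) * v ≠ 0 := mul_ne_zero (sub_ne_zero.2 hβ1) hv
  obtain rfl | hz | hz := eq_or_sq_eq_of_hasEigenvalue_blowUpLinearization h
  · simp [hβ0, hv]
  · exact re_ne_zero_of_sq_eq ha hμ hz
  · exact re_ne_zero_of_sq_eq hd hμ hz

end BlownUpFlow

theorem hessian_nonsingular_and_hyperbolicity_general (l : ℕ) (hl : 2 ≤ l)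
    (α β : ℝ) (hα : 0 < α) (hα2 : α ≠ 2) (hβ : β = α / 2)
    (θ φ : ℝ) (hφ : φ ∈ Set.Ioo (-(Real.pi / 2)) (Real.pi / 2))
    (hnc : ¬(φ = 0 ∧ ∃ k : ℤ, θ = (k : ℝ) * (Real.pi / l)))
    (h1 : deriv (fun t => dihedralU l α t φ) θ = 0)
    (h2 : deriv (fun p => dihedralU l α θ p) φ = 0) :
    deriv (deriv (fun t => dihedralU l α t φ)) θ ≠ 0 ∧
    deriv (deriv (fun p => dihedralU l α θ p)) φ ≠ 0 ∧
    deriv (fun t => deriv (fun p => dihedralU l α t p) φ) θ = 0 ∧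
    deriv (fun p => deriv (fun t => dihedralU l α t p) θ) φ = 0 ∧
    (!![deriv (deriv (fun t => dihedralU l α t φ)) θ,
          deriv (fun t => deriv (fun p => dihedralU l α t p) φ) θ;
        deriv (fun p => deriv (fun t => dihedralU l α t p) θ) φ,
          deriv (deriv (fun p => dihedralU l α θ p)) φ] :
        Matrix (Fin 2) (Fin 2) ℝ).det ≠ 0 ∧
    ∀ v : ℝ, v ^ 2 = 2 * dihedralU l α θ φ →
      ∀ lam : ℂ,
        Module.End.HasEigenvalue
          (Matrix.toLin'
            ((!![2 * β * v, 0, 0, 0, 0;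
                 0, 0, 0, 1, 0;
                 0, 0, 0, 0, 1;
                 0, (1 / Real.cos φ ^ 2) * deriv (deriv (fun t => dihedralU l α t φ)) θ,
                   deriv (fun t => deriv (fun p => dihedralU l α t p) φ) θ, (β - 1) * v, 0;
                 0, deriv (fun p => deriv (fun t => dihedralU l α t p) θ) φ,
                   deriv (deriv (fun p => dihedralU l α θ p)) φ, 0, (β - 1) * v] :
                Matrix (Fin 5) (Fin 5) ℝ).map (Complex.ofReal ·)))
          lam →
        lam.re ≠ 0 := by
  have hcos : 0 < cos φ := cos_pos_of_mem_Ioo hφ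
  obtain ⟨hsin, hθθ⟩ := sin_eq_zero_and_deriv_deriv_dihedralU_left_ne_zero (by lia) hα hcos
    (fun j _ ↦ sin_sq_add_tan_sq_pos (by lia) hφ hnc j) h1
  have hφφ := deriv_deriv_dihedralU_right_ne_zero hl hα hφ hnc hsin h2
  have hsymm := dihedralU_two_mul_sub (α := α) (by lia) hsin
  have hθφ : deriv (fun t ↦ deriv (fun p ↦ dihedralU l α t p) φ) θ = 0 :=
    deriv_eq_zero_of_comp_two_mul_sub fun t ↦ by simp only [hsymm]
  have hφθ : deriv (fun p ↦ deriv (fun t ↦ dihedralU l α t p) θ) φ = 0 := by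
    have hθ0 (p : ℝ) : deriv (fun t ↦ dihedralU l α t p) θ = 0 :=
      deriv_eq_zero_of_comp_two_mul_sub fun t ↦ hsymm t p
    simp only [hθ0, deriv_const]
  refine ⟨hθθ, hφφ, hθφ, hφθ, ?_, fun v hv lam hlam ↦ ?_⟩
  · rw [Matrix.det_fin_two_of, hθφ, zero_mul, sub_zero]
    exact mul_ne_zero hθθ hφφ
  · have hv0 : v ≠ 0 := by
      rintro rfl
      linarith [dihedralU_pos (α := α) (θ := θ) hl hcos]
    rw [hθφ, hφθ] at hlam
    exact re_ne_zero_of_hasEigenvalue_blowUpLinearization (by linarith) (by grind) hv0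
      (mul_ne_zero (by positivity) hθθ) hφφ hlam

theorem hessian_nonsingular_and_hyperbolicity (l : ℕ) (hl : 2 ≤ l)
    (α β : ℝ) (hα : α ∈ Set.Ioo (0 : ℝ) 2) (hβ : β = α / 2)
    (θ φ : ℝ) (hφ : φ ∈ Set.Ioo (-(Real.pi / 2)) (Real.pi / 2))
    (hnc : ¬(φ = 0 ∧ ∃ k : ℤ, θ = (k : ℝ) * (Real.pi / l)))
    (h1 : deriv (fun t => dihedralU l α t φ) θ = 0)
    (h2 : deriv (fun p => dihedralU l α θ p) φ = 0) :
    deriv (deriv (fun t => dihedralU l α t φ)) θ ≠ 0 ∧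
    deriv (deriv (fun p => dihedralU l α θ p)) φ ≠ 0 ∧
    deriv (fun t => deriv (fun p => dihedralU l α t p) φ) θ = 0 ∧
    deriv (fun p => deriv (fun t => dihedralU l α t p) θ) φ = 0 ∧
    (!![deriv (deriv (fun t => dihedralU l α t φ)) θ,
          deriv (fun t => deriv (fun p => dihedralU l α t p) φ) θ;
        deriv (fun p => deriv (fun t => dihedralU l α t p) θ) φ,
          deriv (deriv (fun p => dihedralU l α θ p)) φ] :
        Matrix (Fin 2) (Fin 2) ℝ).det ≠ 0 ∧
    ∀ v : ℝ, v ^ 2 = 2 * dihedralU l α θ φ →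
      ∀ lam : ℂ,
        Module.End.HasEigenvalue
          (Matrix.toLin'
            ((!![2 * β * v, 0, 0, 0, 0;
                 0, 0, 0, 1, 0;
                 0, 0, 0, 0, 1;
                 0, (1 / Real.cos φ ^ 2) * deriv (deriv (fun t => dihedralU l α t φ)) θ,
                   deriv (fun t => deriv (fun p => dihedralU l α t p) φ) θ, (β - 1) * v, 0;
                 0, deriv (fun p => deriv (fun t => dihedralU l α t p) θ) φ,
                   deriv (deriv (fun p => dihedralU l α θ p)) φ, 0, (β - 1) * v] :
                Matrix (Fin 5) (Fin 5) ℝ).map (Complex.ofReal ·)))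
          lam →
        lam.re ≠ 0 := by
  exact hessian_nonsingular_and_hyperbolicity_general l hl α β hα.1 hα.2.ne hβ θ φ hφ hnc h1 h2
end
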